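/- arXiv:1808.07037 — 2 statements merged into one kernel-verified Lean document; each statement's English description precedes it below -/
import Mathlib

section
/- Let H be a pre-Hilbert space and L : H → H̄ a positive linear operator into the completion H̄. Define the semi-inner product (x,y) := ⟨x, L y⟩ with kernel N_L, and let H_L := H/N_L. Then there exists a linear isometry from H_L (with the induced inner product) into H̄; equivalently, the Hilbert dimension of the completion of H_L is at most the Hilbert dimension of H̄. -/
open scoped InnerProductSpace ComplexOrder

/-- Polar decomposition: an injective bounded operator gives an isometry. -/
theorem exists_isometry_of_injective {K : Type*} [NormedAddCommGroup K] [InnerProductSpace ℂ K]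
    [CompleteSpace K] {M : Type*} [NormedAddCommGroup M] [InnerProductSpace ℂ M] [CompleteSpace M]
    (B : K →L[ℂ] M) (hB : ∀ x, B x = 0 → x = 0) : Nonempty (K →ₗᵢ[ℂ] M) := by
  have hP : 0 ≤ (ContinuousLinearMap.adjoint B ∘L B) :=
    (ContinuousLinearMap.nonneg_iff_isPositive _).2
      (ContinuousLinearMap.isPositive_adjoint_comp_self B)
  obtain ⟨S, hS⟩ : ∃ S : K →L[ℂ] K, S = CFC.sqrt (ContinuousLinearMap.adjoint B ∘L B) := ⟨_, rfl⟩
  have hS2 : S * S = ContinuousLinearMap.adjoint B ∘L B := by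
    rw [hS]; exact CFC.sqrt_mul_sqrt_self _ hP
  have hS0 : 0 ≤ S := by rw [hS]; exact CFC.sqrt_nonneg _
  have hSsa : ContinuousLinearMap.adjoint S = S :=
    ((ContinuousLinearMap.nonneg_iff_isPositive _).1 hS0).isSelfAdjoint.adjoint_eq
  have hin : ∀ x y, ⟪S x, S y⟫_ℂ = ⟪B x, B y⟫_ℂ := by
    intro x y
    have h1 : S (S y) = ContinuousLinearMap.adjoint B (B y) := by
      have := congrArg (fun T : K →L[ℂ] K => T y) hS2
      simpa using this
    rw [← ContinuousLinearMap.adjoint_inner_right B, ← h1,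
      ← ContinuousLinearMap.adjoint_inner_right S, hSsa]
  have hnorm : ∀ x, ‖B x‖ = ‖S x‖ := by
    intro x
    rw [@norm_eq_sqrt_re_inner ℂ, @norm_eq_sqrt_re_inner ℂ, hin]
  have hd : DenseRange (S : K →ₗ[ℂ] K) := by
    have : (LinearMap.range (S : K →ₗ[ℂ] K)).topologicalClosure = ⊤ := by
      rw [Submodule.topologicalClosure_eq_top_iff, Submodule.eq_bot_iff]
      intro x hx
      apply hB
      rw [← norm_eq_zero, hnorm, norm_eq_zero, ← inner_self_eq_zero (𝕜 := ℂ)]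
      rw [Submodule.mem_orthogonal] at hx
      have := hx (S (S x)) ⟨S x, rfl⟩
      rwa [← ContinuousLinearMap.adjoint_inner_right S, hSsa] at this
    rw [← Submodule.dense_iff_topologicalClosure_eq_top] at this
    exact this
  have hb : ∃ C : ℝ, ∀ x, ‖(B : K →ₗ[ℂ] M) x‖ ≤ C * ‖(S : K →ₗ[ℂ] K) x‖ :=
    ⟨1, fun x => by simpa using (hnorm x).le⟩
  let U := (B : K →ₗ[ℂ] M).extendOfNorm (S : K →ₗ[ℂ] K)
  have hU : ∀ x, U (S x) = B x := fun x => LinearMap.extendOfNorm_eq hd hb x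
  refine ⟨⟨(U : K →ₗ[ℂ] M), fun x => ?_⟩⟩
  refine hd.induction_on (p := fun x => ‖U x‖ = ‖x‖) x
    (isClosed_eq U.continuous.norm continuous_norm) (fun a => ?_)
  show ‖U (S a)‖ = ‖S a‖
  rw [hU, hnorm]

theorem exists_map_of_factor {H : Type*} [NormedAddCommGroup H] [InnerProductSpace ℂ H]
    {Hb : Type*} [NormedAddCommGroup Hb] [InnerProductSpace ℂ Hb] [CompleteSpace Hb]
    {K : Type*} [NormedAddCommGroup K] [InnerProductSpace ℂ K] [CompleteSpace K]
    (ι : H →ₗᵢ[ℂ] Hb) (L : H →ₗ[ℂ] Hb) (j : H →ₗ[ℂ] K) (hj : DenseRange j)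
    (h : ∀ x y, ⟪j x, j y⟫_ℂ = ⟪ι x, L y⟫_ℂ) :
    ∃ T : H →ₗ[ℂ] Hb, ∀ x y, ⟪T x, T y⟫_ℂ = ⟪ι x, L y⟫_ℂ := by
  have key : ∀ k : K, (∀ y, ⟪k, j y⟫_ℂ = 0) → k = 0 := by
    intro k hk
    rw [← inner_self_eq_zero (𝕜 := ℂ)]
    exact hj.induction_on (p := fun z => ⟪k, z⟫_ℂ = 0) k
      (isClosed_eq (by fun_prop) continuous_const) hk
  let g : H →ₗ[ℂ] WithLp 2 (Hb × K) :=
    (WithLp.linearEquiv 2 ℂ (Hb × K)).symm.toLinearMap ∘ₗ (ι.toLinearMap.prod j)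
  let G : Submodule ℂ (WithLp 2 (Hb × K)) := (LinearMap.range g).topologicalClosure
  have : CompleteSpace G := (Submodule.isClosed_topologicalClosure _).completeSpace_coe
  let p1 : G →L[ℂ] Hb := (WithLp.fstL 2 ℂ Hb K) ∘L G.subtypeL
  let p2 : G →L[ℂ] K := (WithLp.sndL 2 ℂ Hb K) ∘L G.subtypeL
  have hG : ∀ w : G, ∀ y, ⟪p1 w, L y⟫_ℂ = ⟪p2 w, j y⟫_ℂ := by
    rintro ⟨w, hw⟩ y
    have hcl : IsClosed {w : WithLp 2 (Hb × K) | ⟪WithLp.fstL 2 ℂ Hb K w, L y⟫_ℂ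
        = ⟪WithLp.sndL 2 ℂ Hb K w, j y⟫_ℂ} := isClosed_eq (by fun_prop) (by fun_prop)
    refine (closure_minimal (s := (LinearMap.range g : Set (WithLp 2 (Hb × K)))) ?_ hcl :
      closure (LinearMap.range g : Set (WithLp 2 (Hb × K))) ⊆ _) hw
    rintro _ ⟨x, rfl⟩
    exact (h x y).symm
  have hp1 : ∀ w, p1 w = 0 → w = 0 := by
    intro w hw
    have h2 : p2 w = 0 := key _ fun y => by rw [← hG, hw, inner_zero_left]
    apply Subtype.ext
    apply WithLp.ofLp_injective
    exact Prod.ext hw h2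
  have hp2 : ∀ k, ContinuousLinearMap.adjoint p2 k = 0 → k = 0 := by
    intro k hk
    apply key
    intro y
    have := ContinuousLinearMap.adjoint_inner_left p2
      (⟨g y, Submodule.le_topologicalClosure _ ⟨y, rfl⟩⟩ : G) k
    rw [hk, inner_zero_left] at this
    exact this.symm
  obtain ⟨V⟩ := exists_isometry_of_injective (p1 ∘L ContinuousLinearMap.adjoint p2)
    (fun x hx => hp2 x (hp1 _ hx))
  exact ⟨V.toLinearMap ∘ₗ j, fun x y => by simp [V.inner_map_map, h]⟩

theorem exists_completion_of_core.{u} {F : Type u} [AddCommGroup F] [Module ℂ F]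
    (c : PreInnerProductSpace.Core ℂ F) :
    ∃ (K : Type u) (_ : NormedAddCommGroup K) (_ : InnerProductSpace ℂ K) (_ : CompleteSpace K)
      (j : F →ₗ[ℂ] K), DenseRange j ∧ ∀ x y, ⟪j x, j y⟫_ℂ = c.inner x y := by
  let _ : SeminormedAddCommGroup F := InnerProductSpace.Core.toSeminormedAddCommGroup (𝕜 := ℂ)
  let _ : InnerProductSpace ℂ F := InnerProductSpace.ofCore c
  refine ⟨UniformSpace.Completion F, inferInstance, inferInstance, inferInstance,
    (UniformSpace.Completion.toComplL : F →L[ℂ] UniformSpace.Completion F).toLinearMap, ?_, ?_⟩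
  · exact UniformSpace.Completion.denseRange_coe
  · intro x y
    exact UniformSpace.Completion.inner_coe x y

theorem herm_of_pos {H : Type*} [NormedAddCommGroup H] [InnerProductSpace ℂ H]
    {Hb : Type*} [NormedAddCommGroup Hb] [InnerProductSpace ℂ Hb]
    (ι : H →ₗᵢ[ℂ] Hb) (L : H →ₗ[ℂ] Hb) (hpos : ∀ x : H, 0 ≤ ⟪ι x, L x⟫_ℂ) (x y : H) :
    starRingEnd ℂ ⟪ι y, L x⟫_ℂ = ⟪ι x, L y⟫_ℂ := by
  have im0 : ∀ z, (⟪ι z, L z⟫_ℂ).im = 0 := fun z => ((Complex.le_def.1 (hpos z)).2).symm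
  have h1 := im0 (x + y)
  have h2 := im0 (x + Complex.I • y)
  have hx := im0 x
  have hy := im0 y
  simp only [map_add, map_smul, inner_add_left, inner_add_right, inner_smul_left,
    inner_smul_right, Complex.add_im, Complex.mul_im, Complex.mul_re, Complex.conj_I,
    Complex.add_re, Complex.neg_re, Complex.neg_im, Complex.I_re, Complex.I_im] at h1 h2
  apply Complex.ext
  · simp only [Complex.conj_re]; linarith
  · simp only [Complex.conj_im]; linarith

/-- Let `H` be a pre-Hilbert space, densely and isometrically embedded
(via `ι`) into a Hilbert space `Hb` (its completion), and let `L : H → Hb` be a positive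
linear operator (`⟪x, Lx⟫ ≥ 0` for all `x`).  Let `N` be the kernel
`{x | ⟪x, Lx⟫ = 0}` of the semi-inner product `(x,y) := ⟪x, Ly⟫` and `H_L := H/N`.
Then there is a linear isometry from `H_L` (with the induced inner product
`(x+N, y+N) = ⟪x, Ly⟫`) into `Hb`, i.e. a linear map `T : H/N → Hb` preserving the
induced inner products. -/
theorem posdimlem {H : Type*} [NormedAddCommGroup H] [InnerProductSpace ℂ H]
    {Hb : Type*} [NormedAddCommGroup Hb] [InnerProductSpace ℂ Hb] [CompleteSpace Hb]
    (ι : H →ₗᵢ[ℂ] Hb) (hdense : DenseRange ι)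
    (L : H →ₗ[ℂ] Hb)
    (hpos : ∀ x : H, 0 ≤ ⟪ι x, L x⟫_ℂ)
    (N : Submodule ℂ H) (hN : (N : Set H) = {x : H | ⟪ι x, L x⟫_ℂ = 0}) :
    ∃ T : (H ⧸ N) →ₗ[ℂ] Hb, ∀ x y : H,
      ⟪T (Submodule.Quotient.mk x), T (Submodule.Quotient.mk y)⟫_ℂ = ⟪ι x, L y⟫_ℂ := by
  let c : PreInnerProductSpace.Core ℂ H :=
    { inner := fun x y => ⟪ι x, L y⟫_ℂ
      conj_inner_symm := fun x y => herm_of_pos ι L hpos x y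
      re_inner_nonneg := fun x => (Complex.le_def.1 (hpos x)).1
      add_left := fun x y z => by rw [map_add, inner_add_left]
      smul_left := fun x y r => by rw [map_smul, inner_smul_left] }
  obtain ⟨K, _, _, _, j, hj, hj2⟩ := exists_completion_of_core c
  obtain ⟨T, hT⟩ := exists_map_of_factor ι L j hj hj2
  have hker : N ≤ LinearMap.ker T := by
    intro x hx
    have hx' : x ∈ (N : Set H) := hx
    rw [hN] at hx'
    rw [LinearMap.mem_ker, ← inner_self_eq_zero (𝕜 := ℂ), hT]
    exact hx'
  exact ⟨N.liftQ T hker, fun x y => hT x y⟩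
end

section
/- Let H be a Hilbert space and (π_n)_{n≥0} a sequence of orthogonal projections π_n ∈ B(H^{⊗n}) (Hilbert space tensor powers, π_0 = id_ℂ). If for all n ≥ 1 the inequalities π_{n+1} ≤ id_H ⊗ π_n and π_{n+1} ≤ π_n ⊗ id_H hold, then for all m, n ≥ 1 we have π_{m+n} ≤ π_m ⊗ π_n. -/
open ContinuousLinearMap

theorem aux_cast (T : ℕ → Type*) [∀ n, NormedAddCommGroup (T n)]
    [∀ n, InnerProductSpace ℂ (T n)] (π : ∀ n, T n →L[ℂ] T n) {a b : ℕ} (h : a = b)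
    (h' : (T a →L[ℂ] T a) = (T b →L[ℂ] T b)) (X : T a →L[ℂ] T a) :
    cast h' X * π b = π b ↔ X * π a = π a := by
  subst h
  rfl

/-- Let `H` be a Hilbert space and `T n` its Hilbert-space tensor powers
`H^{⊗n}` (given abstractly as a family of Hilbert spaces together with the usual tensor
product operation `tensorOp m n A B = A ⊗ B` on bounded operators, which is
multiplicative, unital, `*`-compatible and associative).  Let `π n` be orthogonal
projections on `T n` (with `π 0 = id` on `T 0 = ℂ`, which is not needed for the claim).
If for all `n ≥ 1` we have `π (n+1) ≤ id_H ⊗ π n` and `π (n+1) ≤ π n ⊗ id_H` (Loewner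
order, i.e. the differences are positive operators), then `π (m+n) ≤ π m ⊗ π n` for all
`m, n ≥ 1`. -/
theorem proj_tensor_ineq
    (T : ℕ → Type*) [∀ n, NormedAddCommGroup (T n)] [∀ n, InnerProductSpace ℂ (T n)]
    [∀ n, CompleteSpace (T n)]
    (tensorOp : ∀ m n, (T m →L[ℂ] T m) → (T n →L[ℂ] T n) → (T (m + n) →L[ℂ] T (m + n)))
    (hmul : ∀ m n (A A' : T m →L[ℂ] T m) (B B' : T n →L[ℂ] T n),
      tensorOp m n (A ∘L A') (B ∘L B') = tensorOp m n A B ∘L tensorOp m n A' B')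
    (hone : ∀ m n, tensorOp m n 1 1 = 1)
    (hstar : ∀ m n (A : T m →L[ℂ] T m) (B : T n →L[ℂ] T n),
      star (tensorOp m n A B) = tensorOp m n (star A) (star B))
    (hassoc : ∀ k m n (A : T k →L[ℂ] T k) (B : T m →L[ℂ] T m) (C : T n →L[ℂ] T n),
      tensorOp k (m + n) A (tensorOp m n B C) =
        cast (by rw [Nat.add_assoc]) (tensorOp (k + m) n (tensorOp k m A B) C))
    (π : ∀ n, T n →L[ℂ] T n)
    (hidem : ∀ n, π n ∘L π n = π n) (hsa : ∀ n, IsSelfAdjoint (π n))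
    (hL : ∀ n, 1 ≤ n → (tensorOp 1 n 1 (π n) - π (1 + n)).IsPositive)
    (hR : ∀ n, 1 ≤ n → (tensorOp n 1 (π n) 1 - π (n + 1)).IsPositive) :
    ∀ m n, 1 ≤ m → 1 ≤ n →
      (tensorOp m n (π m) (π n) - π (m + n)).IsPositive := by
  have hm : ∀ m n (A A' : T m →L[ℂ] T m) (B B' : T n →L[ℂ] T n),
      tensorOp m n (A * A') (B * B') = tensorOp m n A B * tensorOp m n A' B' := hmul
  have hp : ∀ n, IsStarProjection (π n) := fun n => ⟨hidem n, hsa n⟩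
  have hone' : ∀ n, IsStarProjection (1 : T n →L[ℂ] T n) := fun n => IsStarProjection.one _
  have ht : ∀ m n (A : T m →L[ℂ] T m) (B : T n →L[ℂ] T n), IsStarProjection A →
      IsStarProjection B → IsStarProjection (tensorOp m n A B) := by
    intro m n A B hA hB
    refine ⟨?_, ?_⟩
    · change _ * _ = _
      rw [← hm, hA.isIdempotentElem.eq, hB.isIdempotentElem.eq]
    · change star _ = _
      rw [hstar, hA.isSelfAdjoint.star_eq, hB.isSelfAdjoint.star_eq]
  have key : ∀ n (p q : T n →L[ℂ] T n), IsStarProjection p → IsStarProjection q →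
      ((q - p).IsPositive ↔ q * p = p) := by
    intro n p q h1 h2
    rw [← ContinuousLinearMap.le_def]
    exact h1.le_iff_mul_eq_right h2
  have hL' : ∀ n, 1 ≤ n → tensorOp 1 n 1 (π n) * π (1 + n) = π (1 + n) := fun n hn =>
    (key _ _ _ (hp _) (ht _ _ _ _ (hone' _) (hp _))).1 (hL n hn)
  have hR' : ∀ n, 1 ≤ n → tensorOp n 1 (π n) 1 * π (n + 1) = π (n + 1) := fun n hn =>
    (key _ _ _ (hp _) (ht _ _ _ _ (hp _) (hone' _))).1 (hR n hn)
  have hA : ∀ m n, 1 ≤ m → 1 ≤ n → tensorOp m n (π m) 1 * π (m + n) = π (m + n) := by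
    intro m n h1 h2
    induction n, h2 using Nat.le_induction with
    | base => exact hR' m h1
    | succ n hn ih =>
      rw [← hone n 1, hassoc, aux_cast T π (Nat.add_assoc m n 1)]
      have h3 := hR' (m + n) (by omega)
      rw [← h3, ← mul_assoc, ← hm, ih, mul_one]
  have hB : ∀ m n, 1 ≤ m → 1 ≤ n → tensorOp m n 1 (π n) * π (m + n) = π (m + n) := by
    intro m n h1 h2
    induction m, h1 using Nat.le_induction with
    | base => exact hL' n h2
    | succ m hm1 ih =>
      rw [Nat.add_comm m 1]
      rw [← hone 1 m, ← aux_cast T π (Nat.add_assoc 1 m n) (by rw [Nat.add_assoc]), ← hassoc]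
      have h3 := hL' (m + n) (by omega)
      rw [← h3, ← mul_assoc, ← hm, ih, mul_one]
  intro m n h1 h2
  rw [key _ _ _ (hp _) (ht _ _ _ _ (hp _) (hp _))]
  have h3 := hm m n (π m) 1 1 (π n)
  rw [mul_one, one_mul] at h3
  rw [h3, mul_assoc, hB m n h1 h2, hA m n h1 h2]
end
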